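/- arXiv:1903.03880 — 3 statements merged into one kernel-verified Lean document; each statement's English description precedes it below -/
import Mathlib

section
/- Let n be a finite type, let F ⊆ Matrix n n ℂ be a compact set, and let ρ ∈ Matrix n n ℂ. Suppose that for every ε > 0 there exist a real number s with 0 ≤ s < ε and matrices τ, δ ∈ F such that ρ + s • τ = (1+s) • δ. Then ρ ∈ F. In particular, the robustness of non-Markovianity of ρ with respect to F vanishes if and only if ρ ∈ F (faithfulness); the converse direction holds trivially by taking s = 0. -/
open Matrix
open scoped ComplexOrder

/-- Faithfulness of the robustness of non-Markovianity: if for every `ε > 0` the Choi matrix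
`ρ` admits a mixing `(ρ + s τ)/(1+s) ∈ F` with Markovian noise `τ ∈ F` of weight `s < ε`,
then `ρ` itself lies in the (compact) set `F` of Markovian Choi matrices. -/
theorem robustness_faithful {n : Type*} [Fintype n]
    (F : Set (Matrix n n ℂ)) (hF : IsCompact F) (ρ : Matrix n n ℂ)
    (h : ∀ ε : ℝ, 0 < ε → ∃ s : ℝ, 0 ≤ s ∧ s < ε ∧
      ∃ τ ∈ F, ∃ δ ∈ F, ρ + s • τ = (1 + s) • δ) :
    ρ ∈ F := by
  have hpos : ∀ k : ℕ, (0 : ℝ) < 1 / ((k : ℝ) + 1) := fun k => by positivity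
  choose s hs0 hs1 τ hτ δ hδ he using fun k : ℕ => h _ (hpos k)
  have hs : Filter.Tendsto s Filter.atTop (nhds 0) :=
    squeeze_zero hs0 (fun k => (hs1 k).le) tendsto_one_div_add_atTop_nhds_zero_nat
  haveI : FirstCountableTopology (Matrix n n ℂ) :=
    inferInstanceAs (FirstCountableTopology (n → n → ℂ))
  obtain ⟨⟨a, b⟩, hab, φ, hφ, hlim⟩ :=
    (hF.prod hF).tendsto_subseq (x := fun k => (τ k, δ k)) (fun k => ⟨hτ k, hδ k⟩)
  have hsφ := hs.comp hφ.tendsto_atTop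
  have ha : Filter.Tendsto (fun k => τ (φ k)) Filter.atTop (nhds a) :=
    (continuous_fst.tendsto _).comp hlim
  have hb : Filter.Tendsto (fun k => δ (φ k)) Filter.atTop (nhds b) :=
    (continuous_snd.tendsto _).comp hlim
  have h1 : Filter.Tendsto (fun k => ρ + s (φ k) • τ (φ k)) Filter.atTop
      (nhds (ρ + (0 : ℝ) • a)) := tendsto_const_nhds.add (hsφ.smul ha)
  have h2 : Filter.Tendsto (fun k => (1 + s (φ k)) • δ (φ k)) Filter.atTop
      (nhds ((1 + (0 : ℝ)) • b)) := (tendsto_const_nhds.add hsφ).smul hb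
  simp only [he] at h1
  have h3 := tendsto_nhds_unique h1 h2
  simp only [zero_smul, add_zero, one_smul] at h3
  rw [h3]
  exact hab.2
end

section
/- Let n be a finite type and let F ⊆ Matrix n n ℂ be convex over ℝ. Let ρ₁, ρ₂ ∈ Matrix n n ℂ admit decompositions ρ₁ = (1+s₁) • δ₁ - s₁ • τ₁ and ρ₂ = (1+s₂) • δ₂ - s₂ • τ₂ with s₁, s₂ ≥ 0 and δ₁, δ₂, τ₁, τ₂ ∈ F. Then for every p ∈ [0,1], setting s = p·s₁ + (1-p)·s₂, there exist δ, τ ∈ F such that p • ρ₁ + (1-p) • ρ₂ = (1+s) • δ - s • τ. Consequently the robustness of non-Markovianity with respect to F is a convex function: mixing two non-Markovian Choi matrices cannot increase it beyond the corresponding convex combination. -/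
open Matrix
open scoped ComplexOrder

theorem exists_combo {n : Type*} {F : Set (Matrix n n ℂ)} (hF : Convex ℝ F)
    {x y : Matrix n n ℂ} (hx : x ∈ F) (hy : y ∈ F) {a b : ℝ} (ha : 0 ≤ a) (hb : 0 ≤ b) :
    ∃ z ∈ F, (a + b) • z = a • x + b • y := by
  rcases (add_nonneg ha hb).eq_or_lt with h | h
  · have ha0 : a = 0 := by linarith
    have hb0 : b = 0 := by linarith
    exact ⟨x, hx, by simp [ha0, hb0]⟩
  · refine ⟨(a / (a + b)) • x + (b / (a + b)) • y,
      hF hx hy (by positivity) (by positivity) (by field_simp), ?_⟩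
    rw [smul_add, smul_smul, smul_smul, mul_div_cancel₀ _ h.ne', mul_div_cancel₀ _ h.ne']

/-- Convexity of the robustness of non-Markovianity: given pseudo-mixture decompositions of
`ρ₁` and `ρ₂` with weights `s₁, s₂` over a convex set `F` of Markovian Choi matrices, the
convex combination `p ρ₁ + (1-p) ρ₂` admits a decomposition with weight
`s = p s₁ + (1-p) s₂`. -/
theorem robustness_convex {n : Type*} [Fintype n]
    (F : Set (Matrix n n ℂ)) (hF : Convex ℝ F)
    (ρ₁ ρ₂ δ₁ δ₂ τ₁ τ₂ : Matrix n n ℂ) (s₁ s₂ : ℝ)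
    (hs₁ : 0 ≤ s₁) (hs₂ : 0 ≤ s₂)
    (hδ₁ : δ₁ ∈ F) (hδ₂ : δ₂ ∈ F) (hτ₁ : τ₁ ∈ F) (hτ₂ : τ₂ ∈ F)
    (h₁ : ρ₁ = (1 + s₁) • δ₁ - s₁ • τ₁) (h₂ : ρ₂ = (1 + s₂) • δ₂ - s₂ • τ₂)
    (p : ℝ) (hp : p ∈ Set.Icc (0 : ℝ) 1) :
    ∃ δ ∈ F, ∃ τ ∈ F,
      p • ρ₁ + (1 - p) • ρ₂ =
        (1 + (p * s₁ + (1 - p) * s₂)) • δ - (p * s₁ + (1 - p) * s₂) • τ := by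
  obtain ⟨hp0, hp1⟩ := hp
  have hq : 0 ≤ 1 - p := by linarith
  obtain ⟨δ, hδ, eδ⟩ := exists_combo hF hδ₁ hδ₂ (a := p * (1 + s₁)) (b := (1 - p) * (1 + s₂))
    (by positivity) (by positivity)
  obtain ⟨τ, hτ, eτ⟩ := exists_combo hF hτ₁ hτ₂ (a := p * s₁) (b := (1 - p) * s₂)
    (by positivity) (by positivity)
  refine ⟨δ, hδ, τ, hτ, ?_⟩
  have e : 1 + (p * s₁ + (1 - p) * s₂) = p * (1 + s₁) + (1 - p) * (1 + s₂) := by ring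
  rw [e, eδ, eτ, h₁, h₂]
  module
end

section
/- Let n be a finite type and let Λ, Γ, Φ : Matrix n n ℂ →ₗ[ℂ] Matrix n n ℂ satisfy Λ = (1+s) • Γ - s • Φ with s ≥ 0 and Φ positive (Φ maps positive semidefinite matrices to positive semidefinite matrices). Then for every nonempty finite index type J, every family of reals p_j ≥ 0 and density matrices σ_j ∈ Matrix n n ℂ (j ∈ J), and every POVM, i.e., finite family (N_y)_{y ∈ Y} of positive semidefinite matrices with Σ_y N_y = 1, one has Σ_{y ∈ Y} max_{j ∈ J} (p_j · Re Tr(Λ(σ_j) · N_y)) ≤ (1+s) · Σ_{y ∈ Y} max_{j ∈ J} (p_j · Re Tr(Γ(σ_j) · N_y)). -/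
open Matrix
open scoped ComplexOrder

/-- A density matrix: positive semidefinite with unit trace. -/
def IsDensityMatrix {n : Type*} [Fintype n] (ρ : Matrix n n ℂ) : Prop :=
  ρ.PosSemidef ∧ ρ.trace = 1

/-- A positive map: maps positive semidefinite matrices to positive semidefinite matrices. -/
def IsPositiveMap {n : Type*} [Fintype n]
    (Φ : Matrix n n ℂ →ₗ[ℂ] Matrix n n ℂ) : Prop :=
  ∀ X : Matrix n n ℂ, X.PosSemidef → (Φ X).PosSemidef

lemma trace_mul_re_nonneg_aux {n : Type*} [Fintype n] [DecidableEq n]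
    {A B : Matrix n n ℂ} (hA : A.PosSemidef) (hB : B.PosSemidef) :
    0 ≤ ((A * B).trace).re := by
  open scoped MatrixOrder in
  obtain ⟨C, hC⟩ := CStarAlgebra.nonneg_iff_eq_star_mul_self.mp hB.nonneg
  rw [hC, ← mul_assoc, Matrix.trace_mul_comm, ← mul_assoc]
  have h := (hA.mul_mul_conjTranspose_same C).trace_nonneg
  exact (Complex.le_def.mp h).1

/-- Core inequality of the single-shot information-theoretic bound: for
`Λ = (1+s)Γ - sΦ` with `Φ` positive, the guessing probability
`Σ_y max_j p_j Re Tr[Λ(σ_j)N_y]` is at most `(1+s)` times that of `Γ`. -/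
theorem guessing_probability_bound {n : Type*} [Fintype n]
    (Λ Γ Φ : Matrix n n ℂ →ₗ[ℂ] Matrix n n ℂ) (s : ℝ) (hs : 0 ≤ s)
    (hΦ : IsPositiveMap Φ)
    (hdec : Λ = (((1 + s : ℝ) : ℂ)) • Γ - ((s : ℝ) : ℂ) • Φ)
    (J : Type*) [Fintype J] [Nonempty J]
    (p : J → ℝ) (hp : ∀ j, 0 ≤ p j)
    (σ : J → Matrix n n ℂ) (hσ : ∀ j, IsDensityMatrix (σ j))
    (Y : Type*) [Fintype Y] [DecidableEq n]
    (N : Y → Matrix n n ℂ) (hNpos : ∀ y, (N y).PosSemidef)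
    (hNsum : ∑ y, N y = 1) :
    ∑ y, Finset.univ.sup' Finset.univ_nonempty
        (fun j => p j * ((Λ (σ j) * N y).trace).re) ≤
      (1 + s) * ∑ y, Finset.univ.sup' Finset.univ_nonempty
        (fun j => p j * ((Γ (σ j) * N y).trace).re) := by
  rw [Finset.mul_sum]
  refine Finset.sum_le_sum fun y _ => ?_
  refine Finset.sup'_le _ _ fun j _ => ?_
  have h1 := Finset.le_sup' (fun j => p j * ((Γ (σ j) * N y).trace).re) (Finset.mem_univ j)
  have h2 := trace_mul_re_nonneg_aux (hΦ _ (hσ j).1) (hNpos y)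
  have h3 : ((Λ (σ j) * N y).trace).re
      = (1 + s) * ((Γ (σ j) * N y).trace).re - s * ((Φ (σ j) * N y).trace).re := by
    rw [hdec, LinearMap.sub_apply, LinearMap.smul_apply, LinearMap.smul_apply, sub_mul,
      smul_mul_assoc, smul_mul_assoc, Matrix.trace_sub, Matrix.trace_smul, Matrix.trace_smul,
      smul_eq_mul, smul_eq_mul, Complex.sub_re, Complex.re_ofReal_mul, Complex.re_ofReal_mul]
  have h4 := mul_le_mul_of_nonneg_left h1 (by linarith : 0 ≤ 1 + s)
  have h5 := mul_nonneg (hp j) (mul_nonneg hs h2)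
  rw [h3]
  refine le_trans ?_ h4
  linarith
end
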